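/- In ℚ₃, the series b₁(-3) = ∑_{k≥1} (-1)^{k-1}(-3)^{k-1}/(k · C(2k,k)) = ∑_{k≥1} 3^{k-1}/(k · C(2k,k)) converges and equals 0. -/

import Mathlib

open Filter Topology

def auxU (M N : ℕ) : ℤ := ∑ j ∈ Finset.range M, (-3 : ℤ) ^ j * (Nat.choose (N + j) (2 * j + 1) : ℤ)
def auxV (M N : ℕ) : ℤ := ∑ j ∈ Finset.range M, (-3 : ℤ) ^ j * (Nat.choose (N + j) (2 * j) : ℤ)

lemma auxU_succ (M N : ℕ) : auxU M (N + 1) = auxU M N + auxV M N := by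
  unfold auxU auxV
  rw [← Finset.sum_add_distrib]
  refine Finset.sum_congr rfl fun j _ => ?_
  rw [show N + 1 + j = (N + j) + 1 by ring, Nat.choose_succ_succ]
  push_cast
  ring

lemma auxV_succ (M N : ℕ) (h : N + 1 < M) : auxV M (N + 1) = auxV M N - 3 * auxU M (N + 1) := by
  obtain ⟨m, rfl⟩ : ∃ m, M = m + 1 := ⟨M - 1, by omega⟩
  unfold auxU auxV
  rw [Finset.sum_range_succ' _ m, Finset.sum_range_succ' _ m, Finset.sum_range_succ _ m,
    Nat.choose_eq_zero_of_lt (show N + 1 + m < 2 * m + 1 by omega)]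
  have : ∀ j, (-3 : ℤ) ^ (j + 1) * (Nat.choose (N + 1 + (j + 1)) (2 * (j + 1)) : ℤ)
      = (-3 : ℤ) ^ (j + 1) * (Nat.choose (N + (j + 1)) (2 * (j + 1)) : ℤ)
        - 3 * ((-3 : ℤ) ^ j * (Nat.choose (N + 1 + j) (2 * j + 1) : ℤ)) := by
    intro j
    rw [show N + 1 + (j + 1) = (N + 1 + j) + 1 by ring,
      show 2 * (j + 1) = (2 * j + 1) + 1 by ring, Nat.choose_succ_succ,
      show N + (j + 1) = N + 1 + j by ring]
    push_cast
    ring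
  simp only [this, Finset.sum_sub_distrib, ← Finset.mul_sum]
  simp
  ring

lemma auxUV (M k : ℕ) (h : 3 * k < M) : auxU M (3 * k) = 0 ∧ auxV M (3 * k) = 1 := by
  induction k with
  | zero =>
    obtain ⟨m, rfl⟩ : ∃ m, M = m + 1 := ⟨M - 1, by omega⟩
    constructor
    · unfold auxU
      refine Finset.sum_eq_zero fun j _ => ?_
      rw [Nat.choose_eq_zero_of_lt (by omega)]; simp
    · unfold auxV
      rw [Finset.sum_range_succ', Finset.sum_eq_zero]
      · simp
      · intro j _
        rw [Nat.choose_eq_zero_of_lt (by omega)]; simp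
  | succ k ih =>
    obtain ⟨h1, h2⟩ := ih (by omega)
    have a1 := auxU_succ M (3 * k)
    have a2 := auxU_succ M (3 * k + 1)
    have a3 := auxU_succ M (3 * k + 1 + 1)
    have b1 := auxV_succ M (3 * k) (by omega)
    have b2 := auxV_succ M (3 * k + 1) (by omega)
    have b3 := auxV_succ M (3 * k + 1 + 1) (by omega)
    rw [show 3 * (k + 1) = 3 * k + 1 + 1 + 1 by ring]
    constructor <;> linarith

lemma choose_aux (N j : ℕ) (hN : 0 < N) :
    N * (Nat.choose (N + j) j * Nat.choose (N - 1) j) * 2 =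
      Nat.choose (N + j) (2 * j + 1) * ((j + 1) * Nat.choose (2 * (j + 1)) (j + 1)) := by
  obtain ⟨n, rfl⟩ : ∃ n, N = n + 1 := ⟨N - 1, by omega⟩
  have h1 := Nat.add_one_mul_choose_eq n j
  have h2 : Nat.choose (2 * (j + 1)) (j + 1) = 2 * Nat.choose (2 * j + 1) j := by
    have := Nat.centralBinom_eq_two_mul_choose (j + 1)
    rw [show 2 * (j + 1) = (2 * j + 1) + 1 by ring, Nat.choose_succ_succ,
      Nat.choose_symm_half]
    ring
  rw [h2]
  by_cases hj : j ≤ n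
  · have h3 := Nat.choose_mul (n := n + 1 + j) (k := 2 * j + 1) (s := j) (by omega)
    rw [show n + 1 + j - j = n + 1 by omega, show 2 * j + 1 - j = j + 1 by omega] at h3
    simp only [Nat.add_sub_cancel] at *
    calc _ = ((n + 1) * n.choose j) * (n + 1 + j).choose j * 2 := by ring
      _ = ((n + 1 + j).choose j * (n + 1).choose (j + 1)) * (j + 1) * 2 := by rw [h1]; ring
      _ = _ := by rw [← h3]; ring
  · rw [Nat.choose_eq_zero_of_lt (show n + 1 - 1 < j by omega),
      Nat.choose_eq_zero_of_lt (show n + 1 + j < 2 * j + 1 by omega)]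
    simp

noncomputable def aa (k : ℕ) : ℚ_[3] := (3 : ℚ_[3]) ^ k /
        ((k + 1 : ℚ_[3]) * (Nat.choose (2 * (k + 1)) (k + 1) : ℚ_[3]))

noncomputable def cc (n j : ℕ) : ℚ_[3] :=
  (-1) ^ j * ((Nat.choose (3 ^ n + j) j * Nat.choose (3 ^ n - 1) j : ℕ) : ℚ_[3])

lemma term_eq (n j : ℕ) : aa j * cc n j * (2 * 3 ^ n) =
    (((-3 : ℤ) ^ j * (Nat.choose (3 ^ n + j) (2 * j + 1) : ℤ) : ℤ) : ℚ_[3]) := by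
  have h := choose_aux (3 ^ n) j (by positivity)
  have h' := congrArg (Nat.cast : ℕ → ℚ_[3]) h
  have hc : ((Nat.choose (2 * (j + 1)) (j + 1) : ℕ) : ℚ_[3]) ≠ 0 := by
    exact_mod_cast (Nat.choose_pos (by omega)).ne'
  have hj : (j + 1 : ℚ_[3]) ≠ 0 := by exact_mod_cast Nat.succ_ne_zero j
  unfold aa cc
  have h3 : ((-3 : ℚ_[3])) ^ j = (-1) ^ j * 3 ^ j := by rw [← mul_pow]; norm_num
  push_cast at h' ⊢
  rw [h3]
  field_simp
  linear_combination h'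

lemma aa_tsum_zero (n : ℕ) (hn : 1 ≤ n) : ∑' j, aa j * cc n j = 0 := by
  have hz : ∀ j, j ∉ Finset.range (3 ^ n + 1) → aa j * cc n j = 0 := by
    intro j hj
    unfold cc
    rw [Nat.choose_eq_zero_of_lt (show 3 ^ n - 1 < j by rw [Finset.mem_range] at hj; have : 0 < 3 ^ n := (by positivity); omega)]
    simp
  rw [tsum_eq_sum hz]
  obtain ⟨m, rfl⟩ : ∃ m, n = m + 1 := ⟨n - 1, by omega⟩
  have h := (auxUV (3 ^ (m + 1) + 1) (3 ^ m) (by rw [pow_succ]; omega)).1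
  have h2 : (∑ j ∈ Finset.range (3 ^ (m + 1) + 1), aa j * cc (m + 1) j) * (2 * 3 ^ (m + 1)) = 0 := by
    rw [Finset.sum_mul]
    simp only [term_eq]
    rw [← Int.cast_sum]
    rw [show 3 * 3 ^ m = 3 ^ (m + 1) by ring] at h
    unfold auxU at h
    rw [h]; simp
  rcases mul_eq_zero.1 h2 with h | h
  · exact h
  · exact absurd h (mul_ne_zero (by norm_num) (pow_ne_zero _ (by norm_num)))

lemma cc_norm (n j : ℕ) : ‖cc n j‖ ≤ 1 := by
  unfold cc
  rw [norm_mul, norm_pow, norm_neg, norm_one, one_pow, one_mul]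
  exact_mod_cast Padic.norm_int_le_one (p := 3) (_ : ℤ)

lemma pow_tendsto : Tendsto (fun n : ℕ => (3 : ℚ_[3]) ^ n) atTop (𝓝 0) := by
  apply tendsto_pow_atTop_nhds_zero_of_norm_lt_one
  have := Padic.norm_p_lt_one (p := 3)
  exact_mod_cast this

lemma lim1 (j : ℕ) : Tendsto (fun n : ℕ => (Nat.choose (3 ^ n + j) j : ℚ_[3])) atTop (𝓝 1) := by
  induction j with
  | zero => simp
  | succ j ih =>
    have hj : (j + 1 : ℚ_[3]) ≠ 0 := by exact_mod_cast Nat.succ_ne_zero j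
    have : (fun n : ℕ => (Nat.choose (3 ^ n + (j + 1)) (j + 1) : ℚ_[3])) =
        fun n => (3 ^ n + ((j : ℚ_[3]) + 1)) * (Nat.choose (3 ^ n + j) j : ℚ_[3]) / (j + 1) := by
      funext n
      rw [eq_div_iff hj]
      have := congrArg (Nat.cast : ℕ → ℚ_[3]) (Nat.add_one_mul_choose_eq (3 ^ n + j) j)
      push_cast at this
      rw [← add_assoc, ← add_assoc]
      exact this.symm
    rw [this]
    have := (((pow_tendsto.add_const ((j : ℚ_[3]) + 1)).mul ih).div_const ((j : ℚ_[3]) + 1))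
    simpa [hj] using this

lemma lim2 (j : ℕ) : Tendsto (fun n : ℕ => (Nat.choose (3 ^ n - 1) j : ℚ_[3])) atTop
    (𝓝 ((-1) ^ j)) := by
  induction j with
  | zero => simp
  | succ j ih =>
    have hj : (j + 1 : ℚ_[3]) ≠ 0 := by exact_mod_cast Nat.succ_ne_zero j
    have h := (ih.mul (pow_tendsto.sub_const ((j : ℚ_[3]) + 1))).div_const ((j : ℚ_[3]) + 1)
    have e : (-1 : ℚ_[3]) ^ j * (0 - ((j : ℚ_[3]) + 1)) / (j + 1) = (-1) ^ (j + 1) := by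
      field_simp; ring
    rw [e] at h
    refine h.congr' ?_
    filter_upwards [eventually_ge_atTop (j + 1)] with n hn
    have hlt : n < 3 ^ n := Nat.lt_pow_self (by norm_num)
    rw [div_eq_iff hj]
    have := congrArg (Nat.cast : ℕ → ℚ_[3]) (Nat.choose_succ_right_eq (3 ^ n - 1) j)
    rw [Nat.sub_sub, Nat.cast_mul, Nat.cast_mul, Nat.cast_sub (by omega)] at this
    push_cast at this
    rw [this]; ring

lemma cc_lim (j : ℕ) : Tendsto (fun n => cc n j) atTop (𝓝 1) := by
  unfold cc
  have := ((lim1 j).mul (lim2 j)).const_mul ((-1) ^ j)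
  rw [one_mul, ← mul_pow] at this
  simpa using this

lemma norm_inv_le (m B : ℕ) (hm : m ≠ 0) (h : 3 ^ m.factorization 3 ≤ B) :
    ‖(m : ℚ_[3])‖⁻¹ ≤ B := by
  rw [Padic.norm_eq_zpow_neg_valuation (by exact_mod_cast hm), Padic.valuation_natCast,
    ← zpow_neg, neg_neg, zpow_natCast, ← Nat.factorization_def _ Nat.prime_three]
  exact_mod_cast h

lemma aa_norm (k : ℕ) : ‖aa k‖ ≤ 2 * ((k : ℝ) + 1) ^ 2 * (1 / 3) ^ k := by
  unfold aa
  have h1 := norm_inv_le (k + 1) (k + 1) (by omega) (Nat.ordProj_le 3 (by omega))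
  have h2 := norm_inv_le (Nat.choose (2 * (k + 1)) (k + 1)) (2 * (k + 1))
    (Nat.choose_pos (by omega)).ne' (Nat.pow_factorization_choose_le (by omega))
  have h3 : ‖(3 : ℚ_[3])‖ = 1 / 3 := by
    have := Padic.norm_p (p := 3)
    rw [one_div]; exact_mod_cast this
  rw [norm_div, norm_mul, norm_pow, h3, div_eq_mul_inv, mul_inv, mul_comm]
  push_cast at h1 h2
  refine mul_le_mul_of_nonneg_right ?_ (by positivity)
  calc _ ≤ ((k : ℝ) + 1) * (2 * (k + 1)) := mul_le_mul h1 h2 (by positivity) (by positivity)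
    _ = _ := by ring

lemma bound_summable : Summable (fun k : ℕ => 2 * ((k : ℝ) + 1) ^ 2 * (1 / 3) ^ k) := by
  have h : ∀ i : ℕ, Summable (fun k : ℕ => (k : ℝ) ^ i * (1 / 3) ^ k) := fun i =>
    summable_pow_mul_geometric_of_norm_lt_one i (by norm_num)
  refine ((((h 2).mul_left 2).add ((h 1).mul_left 4)).add ((h 0).mul_left 2)).congr fun k => ?_
  ring

/-- In `ℚ₃`, the series `b₁(-3) = ∑_{k≥1} 3^{k-1}/(k · C(2k,k))` converges and equals `0`. -/
theorem stmt_7 :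
    Summable (fun k : ℕ => (3 : ℚ_[3]) ^ k /
        ((k + 1 : ℚ_[3]) * (Nat.choose (2 * (k + 1)) (k + 1) : ℚ_[3]))) ∧
      ∑' k : ℕ, (3 : ℚ_[3]) ^ k /
        ((k + 1 : ℚ_[3]) * (Nat.choose (2 * (k + 1)) (k + 1) : ℚ_[3])) = 0 := by
  change Summable aa ∧ ∑' k, aa k = 0
  refine ⟨Summable.of_norm_bounded bound_summable aa_norm, ?_⟩
  have h : Tendsto (fun n => ∑' j, aa j * cc n j) atTop (𝓝 (∑' j, aa j)) := by
    refine tendsto_tsum_of_dominated_convergence bound_summable (fun j => ?_)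
      (Eventually.of_forall fun n j => ?_)
    · simpa using (cc_lim j).const_mul (aa j)
    · rw [norm_mul]
      exact (mul_le_of_le_one_right (norm_nonneg _) (cc_norm n j)).trans (aa_norm j)
  refine tendsto_nhds_unique h (tendsto_const_nhds.congr' ?_)
  filter_upwards [eventually_ge_atTop 1] with n hn
  exact (aa_tsum_zero n hn).symm
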